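/- arXiv:1806.07771 — 2 statements merged into one kernel-verified Lean document; each statement's English description precedes it below -/
import Mathlib

section
/- Let H be a real Banach space, F : H → H, and S : ℝ × H → H a jointly Fréchet differentiable self-adjoint map, i.e. S(−t, S(t,u)) = u for all t and u. Define the symmetrized defect Ds(t,u) = ∂₁S(t,u) − (1/2)(F(S(t,u)) + D₂S(t,u)(F(u))). Then for all t and u₀, Ds(−t, S(t,u₀)) = D₂S(−t, S(t,u₀))(∂₁S(t,u₀) − (1/2)F(S(t,u₀))) − (1/2)F(u₀). -/
/-!
Differentiating `S(-τ, S(τ,u)) = u` in `τ` at `τ = t` gives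
`∂₁S(-t, S(t,u)) = D₂S(-t, S(t,u))(∂₁S(t,u))`: the reversed step transports time derivatives. In
the defect at `(-t, S(t,u))` the two field terms trade places, since the reversed step returns to
`u`, and linearity of `D₂S` collects the terms.
-/

open Topology

section Calculus

variable {𝕜 E F G : Type*} [NontriviallyNormedField 𝕜]
  [NormedAddCommGroup E] [NormedSpace 𝕜 E] [NormedAddCommGroup F] [NormedSpace 𝕜 F]
  [NormedAddCommGroup G] [NormedSpace 𝕜 G]
  {f : E → F → G} {f₁ : E →L[𝕜] G} {f₂ : F →L[𝕜] G}

theorem hasFDerivAt_uncurry_coprod {x : E} {y : F} (hf : DifferentiableAt 𝕜 ↿f (x, y))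
    (hf₁ : HasFDerivAt (f · y) f₁ x) (hf₂ : HasFDerivAt (f x) f₂ y) :
    HasFDerivAt ↿f (f₁.coprod f₂) (x, y) := by
  have hL := hf.hasFDerivAt
  have hinl : HasFDerivAt (f · y) (fderiv 𝕜 ↿f (x, y) ∘L .inl 𝕜 E F) x :=
    hL.comp (f := (·, y)) x (hasFDerivAt_prodMk_left x y)
  have hinr : HasFDerivAt (f x) (fderiv 𝕜 ↿f (x, y) ∘L .inr 𝕜 E F) y :=
    hL.comp y (hasFDerivAt_prodMk_right x y)
  rwa [← hinl.unique hf₁, ← hinr.unique hf₂, ContinuousLinearMap.coprod_comp_inl_inr]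

theorem hasDerivAt_comp₂_of_partial {a : 𝕜 → E} {b : 𝕜 → F} {a' : E} {b' : F} {t : 𝕜}
    (hf : DifferentiableAt 𝕜 ↿f (a t, b t))
    (hf₁ : HasFDerivAt (f · (b t)) f₁ (a t)) (hf₂ : HasFDerivAt (f (a t)) f₂ (b t))
    (ha : HasDerivAt a a' t) (hb : HasDerivAt b b' t) :
    HasDerivAt (fun τ => f (a τ) (b τ)) (f₁ a' + f₂ b') t := by
  have hL := hasFDerivAt_uncurry_coprod hf hf₁ hf₂
  exact hL.comp_hasDerivAt t (ha.prodMk hb)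

end Calculus

section SelfAdjointScheme

variable {𝕜 E : Type*} [NontriviallyNormedField 𝕜] [NormedAddCommGroup E] [NormedSpace 𝕜 E]

theorem time_deriv_reversed_eq {S : 𝕜 → E → E} {t : 𝕜} {u v w : E} {A : E →L[𝕜] E}
    (hS : DifferentiableAt 𝕜 ↿S (-t, S t u)) (hv : HasDerivAt (S · u) v t)
    (hw : HasDerivAt (S · (S t u)) w (-t)) (hA : HasFDerivAt (S (-t)) A (S t u))
    (hsym : ∀ᶠ τ in 𝓝 t, S (-τ) (S τ u) = u) :
    w = A v := by
  have hchain : HasDerivAt (fun τ => S (-τ) (S τ u)) (-w + A v) t := by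
    simpa using hasDerivAt_comp₂_of_partial hS hw.hasFDerivAt hA (hasDerivAt_neg t) hv
  have hzero : HasDerivAt (fun τ => S (-τ) (S τ u)) 0 t :=
    (hasDerivAt_const t u).congr_of_eventuallyEq hsym
  exact neg_add_eq_zero.mp (hchain.unique hzero)

/-- The defect of a scheme `S` for the vector field `F`, whose partial derivatives `∂₁S` and `D₂S`
are passed as the data `S₁` and `DS`. The weight `c = 1/2` gives the paper's symmetrized defect. -/
def symmetrizedDefect (c : 𝕜) (F : E → E) (S S₁ : 𝕜 → E → E) (DS : 𝕜 → E → E →L[𝕜] E)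
    (t : 𝕜) (u : E) : E :=
  S₁ t u - c • (F (S t u) + DS t u (F u))

theorem symmetrized_defect_reversed_identity_general (c : 𝕜) (F : E → E) {S S₁ : 𝕜 → E → E}
    {DS : 𝕜 → E → E →L[𝕜] E} {t : 𝕜} {u₀ : E}
    (hS : DifferentiableAt 𝕜 ↿S (-t, S t u₀))
    (hS₁ : HasDerivAt (S · u₀) (S₁ t u₀) t)
    (hS₁_rev : HasDerivAt (S · (S t u₀)) (S₁ (-t) (S t u₀)) (-t))
    (hDS_rev : HasFDerivAt (S (-t)) (DS (-t) (S t u₀)) (S t u₀))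
    (hsym : ∀ᶠ τ in 𝓝 t, S (-τ) (S τ u₀) = u₀) :
    symmetrizedDefect c F S S₁ DS (-t) (S t u₀)
      = DS (-t) (S t u₀) (S₁ t u₀ - c • F (S t u₀)) - c • F u₀ := by
  have htime : S₁ (-t) (S t u₀) = DS (-t) (S t u₀) (S₁ t u₀) :=
    time_deriv_reversed_eq hS hS₁ hS₁_rev hDS_rev hsym
  have hreturn : S (-t) (S t u₀) = u₀ := hsym.self_of_nhds
  rw [symmetrizedDefect, htime, hreturn, map_sub, map_smul, smul_add]
  abel

end SelfAdjointScheme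

/-- For a self-adjoint scheme `S`, the symmetrized defect
`Ds(t,u) = ∂₁S(t,u) - (1/2)(F(S(t,u)) + D₂S(t,u)(F(u)))` satisfies
`Ds(-t, S(t,u₀)) = D₂S(-t,S(t,u₀))(∂₁S(t,u₀) - (1/2)F(S(t,u₀))) - (1/2)F(u₀)`. -/
theorem symmetrized_defect_reversed_identity
    {H : Type*} [NormedAddCommGroup H] [NormedSpace ℝ H]
    (F : H → H)
    (S : ℝ → H → H) (S₁ : ℝ → H → H) (DS : ℝ → H → (H →L[ℝ] H))
    (hS : Differentiable ℝ (fun q : ℝ × H => S q.1 q.2))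
    (hS₁ : ∀ t u, HasDerivAt (fun τ => S τ u) (S₁ t u) t)
    (hDS : ∀ t u, HasFDerivAt (S t) (DS t u) u)
    (hsym : ∀ t u, S (-t) (S t u) = u)
    (Ds : ℝ → H → H)
    (hDs : ∀ t u, Ds t u = S₁ t u - (1/2 : ℝ) • (F (S t u) + DS t u (F u)))
    (t : ℝ) (u₀ : H) :
    Ds (-t) (S t u₀)
      = DS (-t) (S t u₀) (S₁ t u₀ - (1/2 : ℝ) • F (S t u₀)) - (1/2 : ℝ) • F u₀ := by
  rw [hDs]
  exact symmetrized_defect_reversed_identity_general (1/2) F (hS _) (hS₁ t u₀) (hS₁ _ _)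
    (hDS _ _) (.of_forall (hsym · u₀))
end

section
/- Let H be a real Banach space, F : H → H Lipschitz with constant Λ, and E : ℝ × H → H a flow for u' = F(u) satisfying the hypotheses of the fundamental identity (E(0,u) = u, group property, ∂₁E = F∘E, Fréchet differentiability in u), so that F(E(t,u)) = D₂E(t,u)(F(u)). Let S : ℝ × H → H be jointly Fréchet differentiable, and define the classical defect Dc(t,u) = ∂₁S(t,u) − F(S(t,u)) and the modified defect D(t,u) = ∂₁S(t,u) − D₂S(t,u)(F(u)). Then exactly D(t,u) − Dc(t,u) = (F(S(t,u)) − F(E(t,u))) − (D₂S(t,u) − D₂E(t,u))(F(u)); consequently, if for some p ≥ 1 and constants C, t* > 0 one has ‖S(t,u) − E(t,u)‖ ≤ C|t|^{p+1} and ‖(D₂S(t,u) − D₂E(t,u))(F(u))‖ ≤ C|t|^{p+1} for |t| ≤ t*, then ‖D(t,u) − Dc(t,u)‖ ≤ (ΛC + C)|t|^{p+1}, i.e. D(t,u) = Dc(t,u) + O(t^{p+1}). -/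
/-!
Differentiating the group law `E (t + s) u = E t (E s u)` in `s` at `s = 0` gives
`F (E t u) = D₂E(t,u)(F u)`. Since `∂₁S` cancels in `D - Dc`, this leaves
`F (S t u) - D₂S(t,u)(F u)`, and subtracting the identity for `E` makes both terms small when `S`
is close to `E`.
-/

section Defect

variable {𝕜 H : Type*} [NontriviallyNormedField 𝕜] [NormedAddCommGroup H] [NormedSpace 𝕜 H]
  {F : H → H} {E S : 𝕜 → H → H} {t : 𝕜} {u : H}

/-- `E` is a global flow of the autonomous equation `u' = F u`. Unlike Mathlib's `Flow`, it records
the generating field `F` and does not require joint continuity. -/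
structure IsFlow (F : H → H) (E : 𝕜 → H → H) : Prop where
  map_zero : ∀ u, E 0 u = u
  map_add : ∀ t s u, E (t + s) u = E t (E s u)
  hasDerivAt : ∀ t u, HasDerivAt (fun τ => E τ u) (F (E t u)) t

/-- The classical defect `∂₁S(t,u) - F(S(t,u))` of the scheme `S`: the residual of the equation
`u' = F u` along `τ ↦ S τ u`. As `deriv` is `0` where the derivative does not exist, this is
meaningful only for `S` differentiable in time. -/
noncomputable def classicalDefect (F : H → H) (S : 𝕜 → H → H) (t : 𝕜) (u : H) : H :=
  deriv (fun τ => S τ u) t - F (S t u)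

/-- The modified defect `∂₁S(t,u) - D₂S(t,u)(F(u))` of the scheme `S`: the residual of the
transport equation that `E` satisfies as a function of the initial value. As `deriv` and `fderiv`
are `0` where the derivative does not exist, this is meaningful only for `S` differentiable in each
variable. -/
noncomputable def modifiedDefect (F : H → H) (S : 𝕜 → H → H) (t : 𝕜) (u : H) : H :=
  deriv (fun τ => S τ u) t - fderiv 𝕜 (S t) u (F u)

theorem classicalDefect_eq_of_hasDerivAt {v : H} (hS : HasDerivAt (fun τ => S τ u) v t) :
    classicalDefect F S t u = v - F (S t u) := by
  rw [classicalDefect, hS.deriv]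

theorem modifiedDefect_eq_of_hasDerivAt_of_hasFDerivAt {v : H} {A : H →L[𝕜] H}
    (hS₁ : HasDerivAt (fun τ => S τ u) v t) (hS₂ : HasFDerivAt (S t) A u) :
    modifiedDefect F S t u = v - A (F u) := by
  rw [modifiedDefect, hS₁.deriv, hS₂.fderiv]

theorem IsFlow.fderiv_apply_field (hE : IsFlow F E) (hEt : DifferentiableAt 𝕜 (E t) u) :
    fderiv 𝕜 (E t) u (F u) = F (E t u) := by
  have hleft : HasDerivAt (fun s => E (t + s) u) (F (E t u)) 0 := by
    simpa using (hE.hasDerivAt (t + 0) u).comp_const_add t 0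
  have hright : HasDerivAt (fun s => E t (E s u)) (fderiv 𝕜 (E t) u (F u)) 0 := by
    have horbit : HasDerivAt (fun s => E s u) (F u) 0 := by
      simpa only [hE.map_zero] using hE.hasDerivAt 0 u
    exact hEt.hasFDerivAt.comp_hasDerivAt_of_eq 0 horbit (hE.map_zero u).symm
  simp only [hE.map_add] at hleft
  exact hright.unique hleft

theorem modifiedDefect_sub_classicalDefect (hE : IsFlow F E) (hEt : DifferentiableAt 𝕜 (E t) u) :
    modifiedDefect F S t u - classicalDefect F S t u =
      (F (S t u) - F (E t u)) - (fderiv 𝕜 (S t) u - fderiv 𝕜 (E t) u) (F u) := by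
  rw [modifiedDefect, classicalDefect, sub_apply, hE.fderiv_apply_field hEt]
  abel

theorem norm_modifiedDefect_sub_classicalDefect_le {Λ : NNReal} (hF : LipschitzWith Λ F)
    (hE : IsFlow F E) (hEt : DifferentiableAt 𝕜 (E t) u) :
    ‖modifiedDefect F S t u - classicalDefect F S t u‖ ≤
      Λ * ‖S t u - E t u‖ + ‖(fderiv 𝕜 (S t) u - fderiv 𝕜 (E t) u) (F u)‖ := by
  rw [modifiedDefect_sub_classicalDefect hE hEt]
  exact norm_sub_le_of_le (hF.norm_sub_le _ _) le_rfl

theorem modified_vs_classical_defect_general {Λ : NNReal} (hF : LipschitzWith Λ F)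
    (hE : IsFlow F E) {DE : 𝕜 → H → H →L[𝕜] H} (hDE : ∀ t u, HasFDerivAt (E t) (DE t u) u)
    {S₁ : 𝕜 → H → H} {DS : 𝕜 → H → H →L[𝕜] H}
    (hS₁ : ∀ t u, HasDerivAt (fun τ => S τ u) (S₁ t u) t)
    (hDS : ∀ t u, HasFDerivAt (S t) (DS t u) u)
    {Dc D : 𝕜 → H → H} (hDc : ∀ t u, Dc t u = S₁ t u - F (S t u))
    (hD : ∀ t u, D t u = S₁ t u - DS t u (F u)) {p : ℕ} {C tstar : ℝ}
    (horder : ∀ t u, ‖t‖ ≤ tstar → ‖S t u - E t u‖ ≤ C * ‖t‖ ^ (p + 1))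
    (hDSDE : ∀ t u, ‖t‖ ≤ tstar → ‖(DS t u - DE t u) (F u)‖ ≤ C * ‖t‖ ^ (p + 1)) :
    (∀ t u, D t u - Dc t u = (F (S t u) - F (E t u)) - (DS t u - DE t u) (F u)) ∧
      ∀ t u, ‖t‖ ≤ tstar → ‖D t u - Dc t u‖ ≤ (Λ * C + C) * ‖t‖ ^ (p + 1) := by
  have hDc_eq (t u) : Dc t u = classicalDefect F S t u := by
    rw [hDc, classicalDefect_eq_of_hasDerivAt (hS₁ t u)]
  have hD_eq (t u) : D t u = modifiedDefect F S t u := by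
    rw [hD, modifiedDefect_eq_of_hasDerivAt_of_hasFDerivAt (hS₁ t u) (hDS t u)]
  simp only [hD_eq, hDc_eq, ← (hDS _ _).fderiv, ← (hDE _ _).fderiv] at hDSDE ⊢
  refine ⟨fun t u => modifiedDefect_sub_classicalDefect hE (hDE t u).differentiableAt,
    fun t u ht => ?_⟩
  calc ‖modifiedDefect F S t u - classicalDefect F S t u‖
      ≤ Λ * ‖S t u - E t u‖ + ‖(fderiv 𝕜 (S t) u - fderiv 𝕜 (E t) u) (F u)‖ :=
        norm_modifiedDefect_sub_classicalDefect_le hF hE (hDE t u).differentiableAt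
    _ ≤ Λ * (C * ‖t‖ ^ (p + 1)) + C * ‖t‖ ^ (p + 1) := by
        gcongr
        · exact horder t u ht
        · exact hDSDE t u ht
    _ = (Λ * C + C) * ‖t‖ ^ (p + 1) := by ring

end Defect

/-- Comparison of the modified defect `D(t,u) = ∂₁S(t,u) - D₂S(t,u)(F(u))` with the
classical defect `Dc(t,u) = ∂₁S(t,u) - F(S(t,u))`: exactly,
`D - Dc = (F(S) - F(E)) - (D₂S - D₂E)(F(u))`; consequently, for a scheme of order `p`
(`‖S - E‖ ≤ C|t|^{p+1}` and `‖(D₂S - D₂E)(F(u))‖ ≤ C|t|^{p+1}`) and `F` Lipschitz with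
constant `Λ`, one gets `‖D - Dc‖ ≤ (ΛC + C)|t|^{p+1}`. -/
theorem modified_vs_classical_defect
    {H : Type*} [NormedAddCommGroup H] [NormedSpace ℝ H]
    (F : H → H) (Λ : NNReal) (hFlip : LipschitzWith Λ F)
    (E : ℝ → H → H) (DE : ℝ → H → (H →L[ℝ] H))
    (hE0 : ∀ u, E 0 u = u)
    (hgroup : ∀ t s u, E (t + s) u = E t (E s u))
    (hEt : ∀ t u, HasDerivAt (fun τ => E τ u) (F (E t u)) t)
    (hDE : ∀ t u, HasFDerivAt (E t) (DE t u) u)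
    (S : ℝ → H → H) (S₁ : ℝ → H → H) (DS : ℝ → H → (H →L[ℝ] H))
    (hS : Differentiable ℝ (fun q : ℝ × H => S q.1 q.2))
    (hS₁ : ∀ t u, HasDerivAt (fun τ => S τ u) (S₁ t u) t)
    (hDS : ∀ t u, HasFDerivAt (S t) (DS t u) u)
    (Dc D : ℝ → H → H)
    (hDc : ∀ t u, Dc t u = S₁ t u - F (S t u))
    (hD : ∀ t u, D t u = S₁ t u - DS t u (F u))
    (p : ℕ) (hp : 1 ≤ p) (C tstar : ℝ) (hC : 0 < C) (htstar : 0 < tstar)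
    (horder : ∀ t u, |t| ≤ tstar → ‖S t u - E t u‖ ≤ C * |t| ^ (p + 1))
    (hDSDE : ∀ t u, |t| ≤ tstar → ‖(DS t u - DE t u) (F u)‖ ≤ C * |t| ^ (p + 1)) :
    (∀ t u, D t u - Dc t u
        = (F (S t u) - F (E t u)) - (DS t u - DE t u) (F u)) ∧
      ∀ t u, |t| ≤ tstar →
        ‖D t u - Dc t u‖ ≤ ((Λ : ℝ) * C + C) * |t| ^ (p + 1) :=
  modified_vs_classical_defect_general hFlip ⟨hE0, hgroup, hEt⟩ hDE hS₁ hDS hDc hD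
    horder hDSDE
end
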